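/- arXiv:1607.06294 — 4 statements merged into one kernel-verified Lean document; each statement's English description precedes it below -/
import Mathlib

section
/- Let H be a hierarchical clustering method that satisfies the Axiom of Transformation (A2). Then H satisfies the Axiom of Value (A1) if and only if H satisfies the Extended Axiom of Value (A1'). -/
noncomputable section

/-- A dissimilarity function on a node set: nonnegative and zero exactly on the diagonal.
It need not be symmetric nor satisfy the triangle inequality. -/
def IsDissim {X : Type} (A : X → X → ℝ) : Prop :=
  (∀ x x', 0 ≤ A x x') ∧ (∀ x x', A x x' = 0 ↔ x = x')

/-- A symmetric dissimilarity. -/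
def IsSym {X : Type} (A : X → X → ℝ) : Prop := ∀ x x', A x x' = A x' x

/-- An ultrametric: nonnegative, zero exactly on the diagonal, symmetric, and
satisfying the strong triangle inequality. -/
def IsUltrametric {X : Type} (u : X → X → ℝ) : Prop :=
  (∀ x x', 0 ≤ u x x') ∧ (∀ x x', u x x' = 0 ↔ x = x') ∧
    (∀ x x', u x x' = u x' x) ∧
    (∀ x x' x'', u x x'' ≤ max (u x x') (u x' x''))

/-- The cost of the chain `x :: l`: the maximum dissimilarity over consecutive links. -/
def chainCost {X : Type} (A : X → X → ℝ) : X → List X → ℝ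
  | _, [] => 0
  | x, y :: l => max (A x y) (chainCost A y l)

/-- The set of costs of chains from `x` to `x'`. -/
def chainCosts {X : Type} (A : X → X → ℝ) (x x' : X) : Set ℝ :=
  {c | ∃ l : List X, (x :: l).getLast (List.cons_ne_nil x l) = x' ∧ chainCost A x l = c}

/-- The directed minimum chain cost `ũ*_X(x,x')`: minimum cost over all chains from `x` to `x'`. -/
def minChainCost {X : Type} (A : X → X → ℝ) (x x' : X) : ℝ :=
  sInf (chainCosts A x x')

/-- The nonreciprocal ultrametric `u^NR`. -/
def nonrecipUltra {X : Type} (A : X → X → ℝ) (x x' : X) : ℝ :=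
  max (minChainCost A x x') (minChainCost A x' x)

/-- The reciprocal ultrametric `u^R`. -/
def recipUltra {X : Type} (A : X → X → ℝ) (x x' : X) : ℝ :=
  minChainCost (fun a b => max (A a b) (A b a)) x x'

/-- The unilateral ultrametric `u^U`. -/
def uniUltra {X : Type} (A : X → X → ℝ) (x x' : X) : ℝ :=
  minChainCost (fun a b => min (A a b) (A b a)) x x'

/-- The minimum loop cost `mlc(X, A_X)`: minimum cost over loops, i.e. chains from some
node `x` back to itself containing at least one node different from `x`. -/
def mlc {X : Type} (A : X → X → ℝ) : ℝ :=
  sInf {c | ∃ (x : X) (l : List X),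
    (x :: l).getLast (List.cons_ne_nil x l) = x ∧ (∃ y ∈ l, y ≠ x) ∧ chainCost A x l = c}

/-- The separation `sep(X, A_X)`: minimum dissimilarity over pairs of distinct nodes. -/
def sep {X : Type} (A : X → X → ℝ) : ℝ :=
  sInf {c | ∃ x x' : X, x ≠ x' ∧ A x x' = c}

/-- A hierarchical clustering method: assigns to every (finite) network an output
two-variable function on the same node set. -/
abbrev HCMethod := ∀ (X : Type) [Fintype X], (X → X → ℝ) → X → X → ℝ

/-- A hierarchical clustering method outputs an ultrametric on every network. -/
def IsHCMethod (H : HCMethod) : Prop :=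
  ∀ (X : Type) [Fintype X] (A : X → X → ℝ), IsDissim A → IsUltrametric (H X A)

/-- `p, q` are the two (distinct) nodes of a two-node set. -/
def TwoNode {X : Type} (p q : X) : Prop := p ≠ q ∧ ∀ x : X, x = p ∨ x = q

/-- Axiom of Value (A1): on every two-node network the output clusters the two nodes at
the maximum of the two dissimilarities. -/
def AxiomValue (H : HCMethod) : Prop :=
  ∀ (X : Type) [Fintype X] (p q : X), TwoNode p q →
    ∀ A : X → X → ℝ, IsDissim A → H X A p q = max (A p q) (A q p)

/-- Axiom of Transformation (A2): dissimilarity-reducing maps do not increase output values. -/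
def AxiomTransform (H : HCMethod) : Prop :=
  ∀ (X Y : Type) [Fintype X] [Fintype Y] (AX : X → X → ℝ) (AY : Y → Y → ℝ),
    IsDissim AX → IsDissim AY →
    ∀ φ : X → Y, (∀ x x', AY (φ x) (φ x') ≤ AX x x') →
    ∀ x x' : X, H Y AY (φ x) (φ x') ≤ H X AX x x'

/-- The canonical dissimilarity `A_{n,α,β}` on `Fin n`: `α` for `i > j`, `β` for `i < j`,
`0` on the diagonal. -/
def canonDissim (n : ℕ) (α β : ℝ) : Fin n → Fin n → ℝ :=
  fun i j => if i = j then 0 else if j < i then α else β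

/-- Extended Axiom of Value (A1'): on every permuted canonical network `Δ_n(α,β,Π)` the
output ultrametric equals `max(α,β)` off the diagonal. -/
def ExtAxiomValue (H : HCMethod) : Prop :=
  ∀ (n : ℕ) (α β : ℝ), 0 < α → 0 < β → ∀ π : Equiv.Perm (Fin n),
    ∀ i j : Fin n, i ≠ j →
      H (Fin n) (fun i j => canonDissim n α β (π i) (π j)) i j = max α β

/-- Alternative Axiom of Value (A1''): on every two-node network the output clusters the
two nodes at the minimum of the two dissimilarities. -/
def AltAxiomValue (H : HCMethod) : Prop :=
  ∀ (X : Type) [Fintype X] (p q : X), TwoNode p q →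
    ∀ A : X → X → ℝ, IsDissim A → H X A p q = min (A p q) (A q p)

/-- Agnostic Axiom of Value (A1'''): on every two-node network the output value lies
between the minimum and maximum of the two dissimilarities. -/
def AgnAxiomValue (H : HCMethod) : Prop :=
  ∀ (X : Type) [Fintype X] (p q : X), TwoNode p q →
    ∀ A : X → X → ℝ, IsDissim A →
      min (A p q) (A q p) ≤ H X A p q ∧ H X A p q ≤ max (A p q) (A q p)

/-!
Under (A2) both axioms are equivalent to prescribing the output on the two-node networks
`Δ₂(α, β)` alone. Embedding `Δ₂` onto the nodes `i, j` of a network gives the upper bound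
`max (A i j) (A j i)` for their output value. Conversely, collapsing the two sides of a cut that
separates `i` from `j` gives a lower bound; the two bounds agree as soon as `(i, j)` and `(j, i)`
are the cheapest links across the cut in either direction. In a two-node network the only cut has
this property, and in a permuted canonical network so does a cut into an initial and a final
segment of the underlying order.
-/

namespace IsDissim

variable {X : Type} {A : X → X → ℝ}

theorem self_eq_zero (hA : IsDissim A) (x : X) : A x x = 0 :=
  (hA.2 x x).2 rfl

theorem pos (hA : IsDissim A) {x y : X} (hxy : x ≠ y) : 0 < A x y :=
  (hA.1 x y).lt_of_ne' fun h => hxy ((hA.2 x y).1 h)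

theorem comp_injective (hA : IsDissim A) {W : Type} {f : W → X} (hf : f.Injective) :
    IsDissim fun w w' => A (f w) (f w') :=
  ⟨fun w w' => hA.1 (f w) (f w'), fun w w' => (hA.2 (f w) (f w')).trans hf.eq_iff⟩

end IsDissim

section CanonicalNetwork

variable {n : ℕ} {α β : ℝ} {i j : Fin n}

theorem canonDissim_self (i : Fin n) : canonDissim n α β i i = 0 :=
  if_pos rfl

theorem canonDissim_of_lt (hij : i < j) : canonDissim n α β i j = β := by
  rw [canonDissim, if_neg hij.ne, if_neg hij.not_gt]

theorem canonDissim_of_gt (hij : j < i) : canonDissim n α β i j = α := by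
  rw [canonDissim, if_neg hij.ne', if_pos hij]

theorem isDissim_canonDissim (hα : 0 < α) (hβ : 0 < β) : IsDissim (canonDissim n α β) := by
  refine ⟨fun i j => ?_, fun i j => ?_⟩ <;> rcases lt_trichotomy i j with hij | rfl | hij
  · exact (canonDissim_of_lt hij).symm ▸ hβ.le
  · exact (canonDissim_self i).ge
  · exact (canonDissim_of_gt hij).symm ▸ hα.le
  · simp only [canonDissim_of_lt hij, hβ.ne', hij.ne]
  · simp only [canonDissim_self]
  · simp only [canonDissim_of_gt hij, hα.ne', hij.ne']

end CanonicalNetwork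

/-- The Axiom of Value for the canonical two-node networks `Δ₂(α, β)` on the node set `Fin 2`:
a common special case of (A1) and (A1'), which under (A2) implies both. -/
def CanonTwoNodeValue (H : HCMethod) : Prop :=
  ∀ α β : ℝ, 0 < α → 0 < β → H (Fin 2) (canonDissim 2 α β) 0 1 = max α β

section Method

variable {H : HCMethod}

theorem AxiomValue.canonTwoNodeValue (hV : AxiomValue H) : CanonTwoNodeValue H := by
  intro α β hα hβ
  have hTwo : TwoNode (0 : Fin 2) 1 := ⟨zero_ne_one, Fin.forall_fin_two.2 ⟨.inl rfl, .inr rfl⟩⟩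
  rw [hV (Fin 2) 0 1 hTwo _ (isDissim_canonDissim hα hβ), canonDissim_of_lt zero_lt_one,
    canonDissim_of_gt zero_lt_one, max_comm]

theorem ExtAxiomValue.canonTwoNodeValue (hE : ExtAxiomValue H) : CanonTwoNodeValue H :=
  fun α β hα hβ => hE 2 α β hα hβ (Equiv.refl _) 0 1 zero_ne_one

namespace CanonTwoNodeValue

variable {X : Type} [Fintype X] {A : X → X → ℝ} {i j : X} {S : Set X}

theorem apply_le_max (hC : CanonTwoNodeValue H) (hT : AxiomTransform H) (hA : IsDissim A)
    (hij : i ≠ j) : H X A i j ≤ max (A i j) (A j i) := by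
  have hreduce : ∀ k l : Fin 2, A (![i, j] k) (![i, j] l) ≤ canonDissim 2 (A j i) (A i j) k l := by
    simp [Fin.forall_fin_two, hA.self_eq_zero, canonDissim]
  calc H X A i j
      ≤ H (Fin 2) (canonDissim 2 (A j i) (A i j)) 0 1 :=
        hT (Fin 2) X _ A (isDissim_canonDissim (hA.pos hij.symm) (hA.pos hij)) hA
          ![i, j] hreduce 0 1
    _ = max (A i j) (A j i) := by rw [hC _ _ (hA.pos hij.symm) (hA.pos hij), max_comm]

theorem max_le_apply_of_cut (hC : CanonTwoNodeValue H) (hT : AxiomTransform H) (hA : IsDissim A)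
    {α β : ℝ} (hα : 0 < α) (hβ : 0 < β) (hi : i ∈ S) (hj : j ∉ S)
    (hout : ∀ x ∈ S, ∀ y ∉ S, β ≤ A x y) (hin : ∀ x ∈ S, ∀ y ∉ S, α ≤ A y x) :
    max α β ≤ H X A i j := by
  classical
  let side : X → Fin 2 := fun x => if x ∈ S then 0 else 1
  have side_mem {x : X} (hx : x ∈ S) : side x = 0 := if_pos hx
  have side_notMem {x : X} (hx : x ∉ S) : side x = 1 := if_neg hx
  have hreduce (x y : X) : canonDissim 2 α β (side x) (side y) ≤ A x y := by
    by_cases hx : x ∈ S <;> by_cases hy : y ∈ S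
    · simpa only [side_mem hx, side_mem hy, canonDissim_self] using hA.1 x y
    · simpa only [side_mem hx, side_notMem hy, canonDissim_of_lt zero_lt_one] using hout x hx y hy
    · simpa only [side_notMem hx, side_mem hy, canonDissim_of_gt zero_lt_one] using hin y hy x hx
    · simpa only [side_notMem hx, side_notMem hy, canonDissim_self] using hA.1 x y
  calc max α β
      = H (Fin 2) (canonDissim 2 α β) (side i) (side j) := by
        rw [side_mem hi, side_notMem hj, hC α β hα hβ]
    _ ≤ H X A i j := hT X (Fin 2) A _ hA (isDissim_canonDissim hα hβ) side hreduce i j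

theorem apply_eq_max_of_cut (hC : CanonTwoNodeValue H) (hT : AxiomTransform H) (hA : IsDissim A)
    (hi : i ∈ S) (hj : j ∉ S) (hout : ∀ x ∈ S, ∀ y ∉ S, A i j ≤ A x y)
    (hin : ∀ x ∈ S, ∀ y ∉ S, A j i ≤ A y x) : H X A i j = max (A i j) (A j i) := by
  have hij : i ≠ j := ne_of_mem_of_not_mem hi hj
  refine le_antisymm (hC.apply_le_max hT hA hij) ?_
  rw [max_comm]
  exact hC.max_le_apply_of_cut hT hA (hA.pos hij.symm) (hA.pos hij) hi hj hout hin

theorem axiomValue (hC : CanonTwoNodeValue H) (hT : AxiomTransform H) : AxiomValue H := by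
  rintro X _ p q ⟨hpq, hcover⟩ A hA
  have eq_q {y : X} (hy : y ∉ ({p} : Set X)) : y = q := (hcover y).resolve_left hy
  refine hC.apply_eq_max_of_cut hT hA (S := {p}) rfl hpq.symm ?_ ?_ <;>
  · rintro x rfl y hy
    rw [eq_q hy]

theorem extAxiomValue (hC : CanonTwoNodeValue H) (hT : AxiomTransform H) : ExtAxiomValue H := by
  intro n α β hα hβ π i j hij
  have hA : IsDissim fun k l => canonDissim n α β (π k) (π l) :=
    (isDissim_canonDissim hα hβ).comp_injective π.injective
  rcases lt_or_gt_of_ne (π.injective.ne hij) with hlt | hgt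
  · have hcut {x y : Fin n} (hx : π x < π j) (hy : ¬π y < π j) : π x < π y :=
      hx.trans_le (not_lt.1 hy)
    rw [hC.apply_eq_max_of_cut hT hA (S := {k | π k < π j}) hlt (lt_irrefl (π j)),
      canonDissim_of_lt hlt, canonDissim_of_gt hlt, max_comm]
    · intro x hx y hy
      rw [canonDissim_of_lt hlt, canonDissim_of_lt (hcut hx hy)]
    · intro x hx y hy
      rw [canonDissim_of_gt hlt, canonDissim_of_gt (hcut hx hy)]
  · have hcut {x y : Fin n} (hx : π j < π x) (hy : ¬π j < π y) : π y < π x :=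
      (not_lt.1 hy).trans_lt hx
    rw [hC.apply_eq_max_of_cut hT hA (S := {k | π j < π k}) hgt (lt_irrefl (π j)),
      canonDissim_of_gt hgt, canonDissim_of_lt hgt]
    · intro x hx y hy
      rw [canonDissim_of_gt hgt, canonDissim_of_gt (hcut hx hy)]
    · intro x hx y hy
      rw [canonDissim_of_lt hgt, canonDissim_of_lt (hcut hx hy)]

end CanonTwoNodeValue

end Method

theorem axiomValue_iff_extAxiomValue_general {H : HCMethod} (hA2 : AxiomTransform H) :
    AxiomValue H ↔ ExtAxiomValue H :=
  ⟨fun hV => hV.canonTwoNodeValue.extAxiomValue hA2,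
    fun hE => hE.canonTwoNodeValue.axiomValue hA2⟩

/-- A method satisfying (A2) satisfies the Axiom of Value (A1) if and only if
it satisfies the Extended Axiom of Value (A1'). -/
theorem axiomValue_iff_extAxiomValue
    (H : HCMethod) (hH : IsHCMethod H) (hA2 : AxiomTransform H) :
    AxiomValue H ↔ ExtAxiomValue H :=
  axiomValue_iff_extAxiomValue_general hA2
end
end

section
/- For every network (X, A_X), the reciprocal clustering output u^R_X, defined by u^R_X(x,x') = min over chains C(x,x') from x to x' of max_i max(A_X(x_i,x_{i+1}), A_X(x_{i+1},x_i)), is a valid ultrametric on X: it is nonnegative, u^R_X(x,x') = 0 iff x = x', it is symmetric, and it satisfies the strong triangle inequality u^R_X(x,x'') ≤ max(u^R_X(x,x'), u^R_X(x',x'')) for all x,x',x''. -/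
noncomputable section

/-! Concatenating a chain from `x` to `y` with one from `y` to `z` gives a chain whose cost is the
larger of the two costs, hence the strong triangle inequality; reversing chains gives symmetry.
For definiteness, a chain from `x` to `y ≠ x` has a link that leaves `x`, and when `X` is finite
the costs of such links are bounded away from zero. -/

section ChainCosts

variable {X : Type} {A : X → X → ℝ} {x y z : X} {c d ε : ℝ}

theorem zero_mem_chainCosts_self (A : X → X → ℝ) (x : X) : 0 ∈ chainCosts A x x :=
  ⟨[], rfl, rfl⟩

theorem max_mem_chainCosts_cons (x : X) (hc : c ∈ chainCosts A y z) :
    max (A x y) c ∈ chainCosts A x z := by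
  obtain ⟨l, hl, rfl⟩ := hc
  exact ⟨y :: l, by rwa [List.getLast_cons_cons], rfl⟩

theorem chainCosts_induction {motive : X → ℝ → Prop} (nil : motive y 0)
    (cons : ∀ a b c, c ∈ chainCosts A b y → motive b c → motive a (max (A a b) c))
    (hc : c ∈ chainCosts A x y) : motive x c := by
  obtain ⟨l, hl, rfl⟩ := hc
  induction l generalizing x with
  | nil => exact (show x = y from hl) ▸ nil
  | cons w l ih =>
    rw [List.getLast_cons_cons] at hl
    exact cons x w _ ⟨l, hl, rfl⟩ (ih hl)

theorem nonneg_of_mem_chainCosts (hc : c ∈ chainCosts A x y) : 0 ≤ c :=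
  chainCosts_induction (motive := fun _ c => 0 ≤ c) le_rfl
    (fun _ _ _ _ ih => le_max_of_le_right ih) hc

theorem chainCosts_nonempty (A : X → X → ℝ) (x y : X) : (chainCosts A x y).Nonempty :=
  ⟨_, max_mem_chainCosts_cons x (zero_mem_chainCosts_self A y)⟩

theorem chainCosts_bddBelow (A : X → X → ℝ) (x y : X) : BddBelow (chainCosts A x y) :=
  ⟨0, fun _ => nonneg_of_mem_chainCosts⟩

theorem max_mem_chainCosts_trans (hc : c ∈ chainCosts A x y) (hd : d ∈ chainCosts A y z) :
    max c d ∈ chainCosts A x z := by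
  refine chainCosts_induction (motive := fun a c => max c d ∈ chainCosts A a z) ?_ ?_ hc
  · rwa [max_eq_right (nonneg_of_mem_chainCosts hd)]
  · intro a b c _ ih
    rw [max_assoc]
    exact max_mem_chainCosts_cons a ih

theorem mem_chainCosts_symm (hA : IsSym A) (hc : c ∈ chainCosts A x y) :
    c ∈ chainCosts A y x := by
  refine chainCosts_induction (motive := fun a c => c ∈ chainCosts A y a)
    (zero_mem_chainCosts_self A y) (fun a b c hc ih => ?_) hc
  have link : max (A b a) 0 ∈ chainCosts A b a :=
    max_mem_chainCosts_cons b (zero_mem_chainCosts_self A a)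
  have reversed : max c (max (A b a) 0) ∈ chainCosts A y a := max_mem_chainCosts_trans ih link
  rwa [max_left_comm, max_eq_left (nonneg_of_mem_chainCosts hc), hA b a] at reversed

theorem le_of_mem_chainCosts_of_cut {S : Set X} (hS : ∀ a ∈ S, ∀ b ∉ S, ε ≤ A a b)
    (hx : x ∈ S) (hy : y ∉ S) (hc : c ∈ chainCosts A x y) : ε ≤ c := by
  refine chainCosts_induction (motive := fun a c => a ∈ S → ε ≤ c)
    (fun hyS => absurd hyS hy) (fun a b c _ ih ha => ?_) hc hx
  by_cases hb : b ∈ S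
  · exact le_max_of_le_right (ih hb)
  · exact le_max_of_le_left (hS a ha b hb)

end ChainCosts

section MinChainCost

variable {X : Type} {A : X → X → ℝ} {x y : X} {r ε : ℝ}

theorem minChainCost_lt_iff : minChainCost A x y < r ↔ ∃ c ∈ chainCosts A x y, c < r :=
  csInf_lt_iff (chainCosts_bddBelow A x y) (chainCosts_nonempty A x y)

theorem minChainCost_nonneg (A : X → X → ℝ) (x y : X) : 0 ≤ minChainCost A x y :=
  Real.sInf_nonneg fun _ => nonneg_of_mem_chainCosts

theorem minChainCost_self (A : X → X → ℝ) (x : X) : minChainCost A x x = 0 :=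
  le_antisymm (csInf_le (chainCosts_bddBelow A x x) (zero_mem_chainCosts_self A x))
    (minChainCost_nonneg A x x)

theorem minChainCost_comm (hA : IsSym A) (x y : X) : minChainCost A x y = minChainCost A y x :=
  congrArg sInf (Set.Subset.antisymm (fun _ => mem_chainCosts_symm hA)
    fun _ => mem_chainCosts_symm hA)

theorem minChainCost_le_max (A : X → X → ℝ) (x y z : X) :
    minChainCost A x z ≤ max (minChainCost A x y) (minChainCost A y z) := by
  refine le_of_forall_gt fun r hr => ?_
  obtain ⟨hxy, hyz⟩ := max_lt_iff.1 hr
  obtain ⟨c, hc, hcr⟩ := minChainCost_lt_iff.1 hxy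
  obtain ⟨d, hd, hdr⟩ := minChainCost_lt_iff.1 hyz
  exact minChainCost_lt_iff.2 ⟨max c d, max_mem_chainCosts_trans hc hd, max_lt hcr hdr⟩

theorem le_minChainCost_of_cut {S : Set X} (hS : ∀ a ∈ S, ∀ b ∉ S, ε ≤ A a b)
    (hx : x ∈ S) (hy : y ∉ S) : ε ≤ minChainCost A x y :=
  le_csInf (chainCosts_nonempty A x y) fun _ => le_of_mem_chainCosts_of_cut hS hx hy

theorem minChainCost_pos_of_isolated (hε : 0 < ε) (hx : ∀ b, b ≠ x → ε ≤ A x b) (hxy : x ≠ y) :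
    0 < minChainCost A x y := by
  refine hε.trans_le (le_minChainCost_of_cut (S := {x}) ?_ rfl hxy.symm)
  rintro _ rfl b hb
  exact hx b hb

end MinChainCost

theorem IsDissim.pos_s2 {X : Type} {A : X → X → ℝ} (hA : IsDissim A) {x y : X} (hxy : x ≠ y) :
    0 < A x y :=
  (hA.1 x y).lt_of_ne' (mt (hA.2 x y).1 hxy)

theorem IsDissim.exists_pos_forall_ne_le {X : Type} [Finite X] {A : X → X → ℝ} (hA : IsDissim A)
    (x : X) : ∃ ε, 0 < ε ∧ ∀ x', x' ≠ x → ε ≤ A x x' := by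
  obtain ⟨ε, hε, hle⟩ :=
    Pi.exists_forall_pos_add_lt fun x' : {x' // x' ≠ x} => hA.pos_s2 x'.2.symm
  exact ⟨ε, hε, fun x' hx' => (zero_add ε ▸ hle ⟨x', hx'⟩).le⟩

theorem recipUltra_isUltrametric_general {X : Type} (A : X → X → ℝ)
    (hA : ∀ x, ∃ ε, 0 < ε ∧ ∀ x', x' ≠ x → ε ≤ max (A x x') (A x' x)) :
    IsUltrametric (recipUltra A) := by
  have symm : IsSym fun a b => max (A a b) (A b a) := fun _ _ => max_comm _ _
  refine ⟨minChainCost_nonneg _, fun x x' => ⟨fun h => ?_, ?_⟩, minChainCost_comm symm,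
    minChainCost_le_max _⟩
  · by_contra hne
    obtain ⟨ε, hε, hx⟩ := hA x
    exact (minChainCost_pos_of_isolated hε hx hne).ne' h
  · rintro rfl
    exact minChainCost_self _ x

/-- The reciprocal clustering output is a valid ultrametric. -/
theorem recipUltra_isUltrametric
    (X : Type) [Fintype X] (A : X → X → ℝ) (hA : IsDissim A) :
    IsUltrametric (recipUltra A) :=
  recipUltra_isUltrametric_general A fun x =>
    let ⟨ε, hε, hle⟩ := hA.exists_pos_forall_ne_le x
    ⟨ε, hε, fun x' hx' => le_max_of_le_left (hle x' hx')⟩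
end
end

section
/- The reciprocal clustering method H^R satisfies the Axiom of Value (A1) and the Axiom of Transformation (A2). That is: (i) for the two-node network Δ₂(α,β) = ({p,q}, A) with A(p,q) = α, A(q,p) = β, α,β > 0, the reciprocal ultrametric satisfies u^R(p,q) = max(α,β); and (ii) for any two networks (X, A_X) and (Y, A_Y) and any map φ : X → Y with A_X(x,x') ≥ A_Y(φ(x),φ(x')) for all x,x' ∈ X, the reciprocal ultrametrics satisfy u^R_X(x,x') ≥ u^R_Y(φ(x),φ(x')) for all x,x' ∈ X. -/
noncomputable section

/-!
A chain from `p` to `q` has a link crossing each cut that separates `p` from `q`, so in a two-node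
network no chain is cheaper than the direct link. A map that does not increase dissimilarities does
not increase their symmetrizations either, so it carries every chain to one of no greater cost.
-/

section

variable {X Y : Type}

theorem chainCost_nonneg (A : X → X → ℝ) (x : X) (l : List X) : 0 ≤ chainCost A x l := by
  induction l generalizing x with
  | nil => exact le_rfl
  | cons y l ih => exact le_max_of_le_right (ih y)

theorem le_chainCost_of_cut {A : X → X → ℝ} {s : Set X} {δ : ℝ}
    (hcut : ∀ a ∈ s, ∀ b ∉ s, δ ≤ A a b) {x : X} {l : List X} (hx : x ∈ s)
    (hlast : (x :: l).getLast (List.cons_ne_nil x l) ∉ s) : δ ≤ chainCost A x l := by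
  induction l generalizing x with
  | nil => exact absurd hx hlast
  | cons y l ih =>
    rw [List.getLast_cons_cons] at hlast
    by_cases hy : y ∈ s
    · exact le_max_of_le_right (ih hy hlast)
    · exact le_max_of_le_left (hcut x hx y hy)

theorem chainCost_map_le {A : X → X → ℝ} {B : Y → Y → ℝ} {φ : X → Y}
    (hφ : ∀ a b, B (φ a) (φ b) ≤ A a b) (x : X) (l : List X) :
    chainCost B (φ x) (l.map φ) ≤ chainCost A x l := by
  induction l generalizing x with
  | nil => exact le_rfl
  | cons y l ih => exact max_le_max (hφ x y) (ih y)

theorem minChainCost_le_chainCost (A : X → X → ℝ) {x x' : X} {l : List X}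
    (hlast : (x :: l).getLast (List.cons_ne_nil x l) = x') :
    minChainCost A x x' ≤ chainCost A x l := by
  refine csInf_le ⟨0, ?_⟩ ⟨l, hlast, rfl⟩
  rintro _ ⟨l', -, rfl⟩
  exact chainCost_nonneg A x l'

theorem le_minChainCost {A : X → X → ℝ} {x x' : X} {c : ℝ}
    (h : ∀ l : List X, (x :: l).getLast (List.cons_ne_nil x l) = x' → c ≤ chainCost A x l) :
    c ≤ minChainCost A x x' := by
  refine le_csInf ⟨_, [x'], rfl, rfl⟩ ?_
  rintro _ ⟨l, hlast, rfl⟩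
  exact h l hlast

theorem minChainCost_le {A : X → X → ℝ} {x x' : X} (h : 0 ≤ A x x') :
    minChainCost A x x' ≤ A x x' :=
  calc minChainCost A x x' ≤ chainCost A x [x'] := minChainCost_le_chainCost A rfl
    _ = A x x' := max_eq_left h

theorem le_minChainCost_of_cut_s3 {A : X → X → ℝ} {s : Set X} {δ : ℝ}
    (hcut : ∀ a ∈ s, ∀ b ∉ s, δ ≤ A a b) {x x' : X} (hx : x ∈ s) (hx' : x' ∉ s) :
    δ ≤ minChainCost A x x' :=
  le_minChainCost fun _ hlast => le_chainCost_of_cut hcut hx (hlast ▸ hx')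

theorem TwoNode.minChainCost_eq {p q : X} (h : TwoNode p q) {A : X → X → ℝ} (hA : 0 ≤ A p q) :
    minChainCost A p q = A p q := by
  have hcut : ∀ a ∈ ({p} : Set X), ∀ b ∉ ({p} : Set X), A p q ≤ A a b := by
    rintro a rfl b hb
    rw [(h.2 b).resolve_left hb]
  exact le_antisymm (minChainCost_le hA) (le_minChainCost_of_cut_s3 hcut rfl h.1.symm)

theorem minChainCost_map_le {A : X → X → ℝ} {B : Y → Y → ℝ} {φ : X → Y}
    (hφ : ∀ a b, B (φ a) (φ b) ≤ A a b) (x x' : X) :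
    minChainCost B (φ x) (φ x') ≤ minChainCost A x x' := by
  refine le_minChainCost fun l hlast => ?_
  have hlast_map : (φ x :: l.map φ).getLast (List.cons_ne_nil _ _) = φ x' := by
    simp only [← List.map_cons, List.getLast_map, hlast]
  exact (minChainCost_le_chainCost B hlast_map).trans (chainCost_map_le hφ x l)

end

theorem recip_admissible_general :
    (∀ (X : Type) (p q : X), TwoNode p q →
        ∀ A : X → X → ℝ, 0 ≤ max (A p q) (A q p) → recipUltra A p q = max (A p q) (A q p)) ∧
    (∀ (X Y : Type) (AX : X → X → ℝ) (AY : Y → Y → ℝ) (φ : X → Y),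
        (∀ x x', AY (φ x) (φ x') ≤ AX x x') →
        ∀ x x' : X, recipUltra AY (φ x) (φ x') ≤ recipUltra AX x x') :=
  ⟨fun _ _ _ h _ hA => h.minChainCost_eq hA,
    fun _ _ _ _ _ hφ => minChainCost_map_le fun a b => max_le_max (hφ a b) (hφ b a)⟩

/-- Reciprocal clustering satisfies the Axiom of Value (A1) and the Axiom of
Transformation (A2). -/
theorem recip_admissible :
    (∀ (X : Type) [Fintype X] (p q : X), TwoNode p q →
        ∀ A : X → X → ℝ, IsDissim A → recipUltra A p q = max (A p q) (A q p)) ∧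
    (∀ (X Y : Type) [Fintype X] [Fintype Y]
        (AX : X → X → ℝ) (AY : Y → Y → ℝ), IsDissim AX → IsDissim AY →
        ∀ φ : X → Y, (∀ x x', AY (φ x) (φ x') ≤ AX x x') →
        ∀ x x' : X, recipUltra AY (φ x) (φ x') ≤ recipUltra AX x x') :=
  ⟨fun X _ p q h A hA => recip_admissible_general.1 X p q h A (le_max_of_le_left (hA.1 p q)),
    fun X Y _ _ AX AY _ _ => recip_admissible_general.2 X Y AX AY⟩
end
end

section
/- If a hierarchical clustering method H satisfies the Alternative Axiom of Value (A1'') and the Axiom of Transformation (A2), then H satisfies the Alternative Property of Influence (P1'): for every network (X, A_X) with at least two nodes and all pairs of distinct nodes x ≠ x', the output ultrametric satisfies u_X(x,x') ≥ sep(X, A_X). -/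
noncomputable section

open Classical in
/-- The uniform dissimilarity of value `ε` on `Y`. On two nodes it is `Δ₂(ε, ε)`, the target of the
map collapsing each side of a cut. -/
def uniformDissim (Y : Type) (ε : ℝ) : Y → Y → ℝ :=
  fun y y' => if y = y' then 0 else ε

theorem uniformDissim_of_ne {Y : Type} {ε : ℝ} {y y' : Y} (h : y ≠ y') :
    uniformDissim Y ε y y' = ε :=
  if_neg h

theorem isDissim_uniformDissim {Y : Type} {ε : ℝ} (hε : 0 < ε) :
    IsDissim (uniformDissim Y ε) := by
  refine ⟨fun y y' => ?_, fun y y' => ?_⟩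
  · unfold uniformDissim
    positivity
  · simp [uniformDissim, hε.ne']

theorem AltAxiomValue.apply_uniformDissim {H : HCMethod} (hV : AltAxiomValue H)
    {Y : Type} [Fintype Y] {p q : Y} (hpq : TwoNode p q) {ε : ℝ} (hε : 0 < ε) :
    H Y (uniformDissim Y ε) p q = ε := by
  rw [hV Y p q hpq _ (isDissim_uniformDissim hε), uniformDissim_of_ne hpq.1,
    uniformDissim_of_ne hpq.1.symm, min_self]

namespace IsDissim

variable {X : Type} {A : X → X → ℝ}

theorem pos_s11 (hA : IsDissim A) {a b : X} (hab : a ≠ b) : 0 < A a b :=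
  (hA.1 a b).lt_of_ne' (mt (hA.2 a b).mp hab)

theorem uniformDissim_map_le (hA : IsDissim A) {Y : Type} {φ : X → Y} {ε : ℝ}
    (hφ : ∀ a b, φ a ≠ φ b → ε ≤ A a b) (a b : X) :
    uniformDissim Y ε (φ a) (φ b) ≤ A a b := by
  unfold uniformDissim
  split_ifs with h
  · exact hA.1 a b
  · exact hφ a b h

theorem sep_le (hA : IsDissim A) {a b : X} (hab : a ≠ b) : sep A ≤ A a b := by
  refine csInf_le ⟨0, ?_⟩ ⟨a, b, hab, rfl⟩
  rintro _ ⟨c, d, -, rfl⟩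
  exact hA.1 c d

end IsDissim

theorem exists_ne_eq_sep {X : Type} [Finite X] [Nontrivial X] (A : X → X → ℝ) :
    ∃ a b : X, a ≠ b ∧ A a b = sep A := by
  have hfinite : {c | ∃ a b : X, a ≠ b ∧ A a b = c}.Finite := by
    refine (Set.finite_range (Function.uncurry A)).subset ?_
    rintro _ ⟨a, b, -, rfl⟩
    exact ⟨(a, b), rfl⟩
  obtain ⟨a, b, hab⟩ := exists_pair_ne X
  have hnonempty : {c | ∃ a b : X, a ≠ b ∧ A a b = c}.Nonempty := ⟨A a b, a, b, hab, rfl⟩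
  exact hnonempty.csInf_mem hfinite

theorem IsDissim.sep_pos {X : Type} [Finite X] [Nontrivial X] {A : X → X → ℝ}
    (hA : IsDissim A) : 0 < sep A := by
  obtain ⟨a, b, hab, hsep⟩ := exists_ne_eq_sep A
  exact hsep ▸ hA.pos_s11 hab

-- Membership in `s` collapses the two sides of the cut to the two points of `Prop`; this reduces
-- dissimilarities when `Prop` carries `Δ₂(ε, ε)`, on which (A1'') forces the output `ε`.
theorem alternative_property_of_influence_general {H : HCMethod}
    (hV : AltAxiomValue H) (hT : AxiomTransform H) {X : Type} [Fintype X] {A : X → X → ℝ}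
    (hA : IsDissim A) {s : Set X} {ε : ℝ} (hε : 0 < ε)
    (hcut : ∀ a ∈ s, ∀ b ∉ s, ε ≤ min (A a b) (A b a))
    {x x' : X} (hx : x ∈ s) (hx' : x' ∉ s) : ε ≤ H X A x x' := by
  have hcross (a b : X) (hab : (a ∈ s) ≠ (b ∈ s)) : ε ≤ A a b := by
    by_cases ha : a ∈ s
    · have hb : b ∉ s := fun hb => hab (propext (iff_of_true ha hb))
      exact (hcut a ha b hb).trans (min_le_left _ _)
    · have hb : b ∈ s := by_contra fun hb => hab (propext (iff_of_false ha hb))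
      exact (hcut b hb a ha).trans (min_le_right _ _)
  have hnodes : TwoNode (x ∈ s) (x' ∈ s) := by
    rw [eq_true hx, eq_false hx']
    exact ⟨true_ne_false, Classical.propComplete⟩
  calc ε = H Prop (uniformDissim Prop ε) (x ∈ s) (x' ∈ s) :=
        (hV.apply_uniformDissim hnodes hε).symm
    _ ≤ H X A x x' :=
        hT X Prop A (uniformDissim Prop ε) hA (isDissim_uniformDissim hε) (· ∈ s)
          (hA.uniformDissim_map_le hcross) x x'

/-- Methods satisfying (A1'') and (A2) satisfy the Alternative Property of
Influence (P1'). -/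
theorem alternative_property_of_influence
    (H : HCMethod) (hH : IsHCMethod H) (hA1'' : AltAxiomValue H) (hA2 : AxiomTransform H)
    (X : Type) [Fintype X] (A : X → X → ℝ) (hA : IsDissim A)
    (hn : ∃ a b : X, a ≠ b)
    (x x' : X) (hxx : x ≠ x') :
    sep A ≤ H X A x x' := by
  have : Nontrivial X := ⟨hn⟩
  exact alternative_property_of_influence_general hA1'' hA2 hA hA.sep_pos
    (fun a ha b hb => have hab : a ≠ b := ne_of_mem_of_not_mem ha hb
      le_min (hA.sep_le hab) (hA.sep_le hab.symm))
    (Set.mem_singleton x) hxx.symm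
end
end
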